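/- arXiv:1704.07288 — 2 statements merged into one kernel-verified Lean document; each statement's English description precedes it below -/
import Mathlib

section
/- Let N ≥ 1, let m_1, …, m_N be positive reals and let η_1, …, η_N be pairwise distinct positive reals. For (x,t) ∈ ℝ × ℝ define the N×N real matrix G(x,t) by G_{ij}(x,t) = (√(m_i·m_j)/(η_i + η_j))·e^{−(η_i+η_j)x − (η_i³+η_j³)t}, so that det(I + G(x,t)) > 0 for all (x,t). Then the function u(x,t) := 2·∂_x²(log det(I + G(x,t))) is smooth and solves the KdV equation u_t = (3/2)·u·u_x + (1/4)·u_{xxx} at every point of ℝ × ℝ (the N-soliton solution). -/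
open Real Matrix

/-- Partial derivative in the first (space) variable. -/
noncomputable def pderivX (f : ℝ × ℝ → ℝ) : ℝ × ℝ → ℝ :=
  fun p => deriv (fun x => f (x, p.2)) p.1

/-- Partial derivative in the second (time) variable. -/
noncomputable def pderivT (f : ℝ × ℝ → ℝ) : ℝ × ℝ → ℝ :=
  fun p => deriv (fun t => f (p.1, t)) p.2

namespace KdVAux

attribute [local instance] Matrix.linftyOpNormedRing Matrix.linftyOpNormedAlgebra

variable {N : ℕ}

abbrev Mat (N : ℕ) := Matrix (Fin N) (Fin N) ℝ

lemma hasDerivAt_mat {f : ℝ → Mat N} {f' : Mat N} {s : ℝ}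
    (h : ∀ i j, HasDerivAt (fun s => f s i j) (f' i j) s) : HasDerivAt f f' s := by
  have : HasDerivAt (F := Fin N → Fin N → ℝ) f f' s :=
    hasDerivAt_pi.2 fun i => hasDerivAt_pi.2 fun j => h i j
  exact this

/-- entry evaluation as a continuous linear map -/
noncomputable def entryL (i j : Fin N) : Mat N →L[ℝ] ℝ :=
  LinearMap.toContinuousLinearMap (Matrix.entryLinearMap ℝ ℝ i j)

noncomputable def traceL : Mat N →L[ℝ] ℝ :=
  LinearMap.toContinuousLinearMap (Matrix.traceLinearMap (Fin N) ℝ ℝ)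

noncomputable def singleL (i j : Fin N) : ℝ →L[ℝ] Mat N :=
  LinearMap.toContinuousLinearMap (Matrix.singleLinearMap ℝ i j)

lemma contDiff_mat {E : Type*} [NormedAddCommGroup E] [NormedSpace ℝ E] {n : WithTop ℕ∞}
    {f : E → Mat N} (h : ∀ i j, ContDiff ℝ n (fun s => f s i j)) : ContDiff ℝ n f := by
  have : f = fun s => ∑ i, ∑ j, singleL i j (f s i j) := by
    funext s
    exact Matrix.matrix_eq_sum_single (f s)
  rw [this]
  exact ContDiff.sum fun i _ => ContDiff.sum fun j _ => (singleL i j).contDiff.comp (h i j)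

lemma contDiff_det {n : WithTop ℕ∞} : ContDiff ℝ n (fun A : Mat N => A.det) := by
  simp only [Matrix.det_apply]
  refine ContDiff.sum fun σ _ => ContDiff.const_smul _ (contDiff_prod fun i _ => ?_)
  exact (entryL (σ i) i).contDiff

lemma hasDerivAt_det {A : ℝ → Mat N} {A' : Mat N} {s : ℝ} (h : HasDerivAt A A' s)
    (hd : (A s).det ≠ 0) :
    HasDerivAt (fun s => (A s).det) ((A s).det * ((A s)⁻¹ * A').trace) s := by
  have hf : HasFDerivAt (fun A : Mat N => A.det) _ (A s) :=
    ((contDiff_det (n := 1)).differentiable (by norm_num) (A s)).hasFDerivAt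
  have h1 := hf.comp_hasDerivAt s h
  have hline : HasDerivAt (fun r : ℝ => A s + r • A') A' 0 := by
    have := ((hasDerivAt_id (0:ℝ)).smul_const A').const_add (A s)
    rw [one_smul] at this
    exact this
  have h2 : HasDerivAt (fun r : ℝ => (A s + r • A').det) _ 0 :=
    HasFDerivAt.comp_hasDerivAt (0:ℝ) (l := fun A : Mat N => A.det) (by rw [zero_smul, add_zero]; exact hf) hline
  have h3 : HasDerivAt (fun r : ℝ => (A s + r • A').det) ((A s).det * ((A s)⁻¹ * A').trace) 0 := by
    have : (fun r : ℝ => (A s + r • A').det) = fun r => (A s).det *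
        (1 + ((A s)⁻¹ * A').trace * r + (det (1 + (Polynomial.X : Polynomial ℝ) •
          ((A s)⁻¹ * A').map Polynomial.C)).divX.divX.eval r * r ^ 2) := by
      funext r
      rw [← Matrix.det_one_add_smul, ← Matrix.det_mul]
      congr 1
      rw [mul_add, mul_one, Matrix.mul_smul, ← mul_assoc,
        Matrix.mul_nonsing_inv _ (isUnit_iff_ne_zero.2 hd), one_mul]
    rw [this]
    refine HasDerivAt.const_mul _ ?_
    generalize (det (1 + (Polynomial.X : Polynomial ℝ) •
          ((A s)⁻¹ * A').map Polynomial.C)).divX.divX = P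
    have := (((hasDerivAt_id (0:ℝ)).const_mul ((A s)⁻¹ * A').trace).const_add 1).add
      ((P.hasDerivAt 0).mul ((hasDerivAt_id (0:ℝ)).pow 2))
    simpa using! this
  rw [← h2.unique h3]
  exact h1

lemma hasDerivAt_inv {A : ℝ → Mat N} {A' : Mat N} {s : ℝ} (h : HasDerivAt A A' s)
    (hd : (A s).det ≠ 0) :
    HasDerivAt (fun s => (A s)⁻¹) (-((A s)⁻¹ * A' * (A s)⁻¹)) s := by
  have hu : IsUnit (A s) := (Matrix.isUnit_iff_isUnit_det _).2 (isUnit_iff_ne_zero.2 hd)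
  obtain ⟨U, hU⟩ := hu
  have h1 := hasFDerivAt_ringInverse (𝕜 := ℝ) U
  rw [hU] at h1
  have h2 := h1.comp_hasDerivAt s h
  have h3 : (A s)⁻¹ = ((U⁻¹ : (Mat N)ˣ) : Mat N) := by
    rw [← hU, Matrix.coe_units_inv]
  simp only [Matrix.nonsing_inv_eq_ringInverse] at h3 ⊢
  rw [h3]
  simpa using! h2

lemma contDiff_inv {E : Type*} [NormedAddCommGroup E] [NormedSpace ℝ E] {n : WithTop ℕ∞}
    {A : E → Mat N} (h : ContDiff ℝ n A) (hd : ∀ s, (A s).det ≠ 0) :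
    ContDiff ℝ n (fun s => (A s)⁻¹) := by
  rw [contDiff_iff_contDiffAt]
  intro s
  have hu : IsUnit (A s) := (Matrix.isUnit_iff_isUnit_det _).2 (isUnit_iff_ne_zero.2 (hd s))
  obtain ⟨U, hU⟩ := hu
  have h1 := contDiffAt_ringInverse (n := n) ℝ U
  rw [hU] at h1
  simp only [Matrix.nonsing_inv_eq_ringInverse]
  exact h1.comp s h.contDiffAt

lemma hasDerivAt_mom {A V : ℝ → Mat N} {A' V' : Mat N} {s : ℝ} (P Q : Mat N)
    (h : HasDerivAt A A' s) (hV : HasDerivAt V V' s)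
    (hd : (A s).det ≠ 0) :
    HasDerivAt (fun s => (P * (A s)⁻¹ * Q * V s).trace)
      (P * (-((A s)⁻¹ * A' * (A s)⁻¹)) * Q * V s + P * (A s)⁻¹ * Q * V').trace s :=
  (traceL (N := N)).hasFDerivAt.comp_hasDerivAt s
    ((((hasDerivAt_inv h hd).const_mul P).mul_const Q).mul hV)

lemma trace_rank_one (v : Fin N → ℝ) (X Y : Mat N) :
    (X * vecMulVec v v * Y * vecMulVec v v).trace =
      (X * vecMulVec v v).trace * (Y * vecMulVec v v).trace := by
  rw [Matrix.mul_assoc X, Matrix.vecMulVec_mul, Matrix.mul_assoc, Matrix.vecMulVec_mul_vecMulVec]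
  simp only [Matrix.mul_vecMulVec, Matrix.trace_vecMulVec]
  simp [dotProduct_comm, Matrix.dotProduct_mulVec]
  ring

/-- moments -/
noncomputable def mom (E K V : Mat N) (j k : ℕ) : ℝ := (E ^ j * K * E ^ k * V).trace

lemma mom_symm {E K V : Mat N} (hE : Eᵀ = E) (hK : Kᵀ = K) (hV : Vᵀ = V) (j k : ℕ) :
    mom E K V j k = mom E K V k j := by
  unfold mom
  rw [← Matrix.trace_transpose, Matrix.transpose_mul, Matrix.trace_mul_comm]
  simp only [Matrix.transpose_mul, Matrix.transpose_pow, hE, hK, hV, Matrix.mul_assoc]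

lemma mom_prod (E K : Mat N) (v : Fin N → ℝ) (j k p q : ℕ) :
    (E ^ j * (K * (E ^ p * vecMulVec v v * E ^ q) * K) * E ^ k * vecMulVec v v).trace =
      mom E K (vecMulVec v v) j p * mom E K (vecMulVec v v) q k := by
  unfold mom
  rw [← trace_rank_one]
  simp only [Matrix.mul_assoc]

lemma mom_shift_left (E K V : Mat N) (j k p : ℕ) :
    (E ^ j * K * E ^ k * (V * E ^ p)).trace = mom E K V (j + p) k := by
  unfold mom
  rw [← Matrix.mul_assoc, Matrix.trace_mul_comm, add_comm, pow_add]
  simp only [Matrix.mul_assoc]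

lemma mom_shift_right (E K V : Mat N) (j k p : ℕ) :
    (E ^ j * K * E ^ k * (E ^ p * V)).trace = mom E K V j (k + p) := by
  unfold mom
  rw [pow_add]
  simp only [Matrix.mul_assoc]

lemma mom_rel {E A : Mat N} {v : Fin N → ℝ} (hd : A.det ≠ 0)
    (hA : E ^ 2 * A - A * E ^ 2 = E * vecMulVec v v - vecMulVec v v * E) (j k : ℕ) :
    mom E A⁻¹ (vecMulVec v v) j (k + 2) - mom E A⁻¹ (vecMulVec v v) (j + 2) k =
      mom E A⁻¹ (vecMulVec v v) j 1 * mom E A⁻¹ (vecMulVec v v) 0 k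
      - mom E A⁻¹ (vecMulVec v v) j 0 * mom E A⁻¹ (vecMulVec v v) 1 k := by
  have h1 : A⁻¹ * A = 1 := Matrix.nonsing_inv_mul _ (isUnit_iff_ne_zero.2 hd)
  have h2 : A * A⁻¹ = 1 := Matrix.mul_nonsing_inv _ (isUnit_iff_ne_zero.2 hd)
  rw [← mom_prod, ← mom_prod]
  have h3 : A⁻¹ * E ^ 2 - E ^ 2 * A⁻¹ = A⁻¹ * (E ^ 1 * vecMulVec v v * E ^ 0) * A⁻¹
      - A⁻¹ * (E ^ 0 * vecMulVec v v * E ^ 1) * A⁻¹ := by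
    simp only [pow_one, pow_zero, mul_one, one_mul]
    rw [← sub_mul, ← mul_sub, ← hA, mul_sub, sub_mul, mul_assoc, mul_assoc, h2, ← mul_assoc A⁻¹ A,
      h1, one_mul, mul_one]
  rw [← Matrix.trace_sub, ← sub_mul, ← sub_mul, ← mul_sub, ← h3]
  unfold mom
  rw [← Matrix.trace_sub]
  congr 1
  rw [add_comm k 2, pow_add, pow_add]
  noncomm_ring

lemma mom_deriv_x {E : Mat N} {A : ℝ → Mat N} {v : ℝ → Fin N → ℝ} {s : ℝ}
    (hA : HasDerivAt A (-vecMulVec (v s) (v s)) s)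
    (hV : HasDerivAt (fun s => vecMulVec (v s) (v s))
      (-(E * vecMulVec (v s) (v s) + vecMulVec (v s) (v s) * E)) s)
    (hd : (A s).det ≠ 0) (a : ℕ → ℕ → ℝ)
    (ha : ∀ j k, a j k = mom E (A s)⁻¹ (vecMulVec (v s) (v s)) j k) (j k : ℕ) :
    HasDerivAt (fun s => mom E (A s)⁻¹ (vecMulVec (v s) (v s)) j k)
      (-a (j + 1) k - a j (k + 1) + a j 0 * a 0 k) s := by
  refine (hasDerivAt_mom (E ^ j) (E ^ k) hA hV hd).congr_deriv ?_
  simp only [ha]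
  rw [← mom_prod, ← mom_shift_left, ← mom_shift_right, ← Matrix.trace_neg, ← Matrix.trace_sub,
    ← Matrix.trace_add]
  congr 1
  simp only [pow_one, pow_zero, mul_one, one_mul]
  noncomm_ring

lemma mom_deriv_t {E : Mat N} {A : ℝ → Mat N} {v : ℝ → Fin N → ℝ} {s : ℝ}
    (hA : HasDerivAt A (-(E ^ 2 * vecMulVec (v s) (v s) - E * vecMulVec (v s) (v s) * E
      + vecMulVec (v s) (v s) * E ^ 2)) s)
    (hV : HasDerivAt (fun s => vecMulVec (v s) (v s))
      (-(E ^ 3 * vecMulVec (v s) (v s) + vecMulVec (v s) (v s) * E ^ 3)) s)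
    (hd : (A s).det ≠ 0) (a : ℕ → ℕ → ℝ)
    (ha : ∀ j k, a j k = mom E (A s)⁻¹ (vecMulVec (v s) (v s)) j k) (j k : ℕ) :
    HasDerivAt (fun s => mom E (A s)⁻¹ (vecMulVec (v s) (v s)) j k)
      (-a (j + 3) k - a j (k + 3) + a j 2 * a 0 k - a j 1 * a 1 k + a j 0 * a 2 k) s := by
  refine (hasDerivAt_mom (E ^ j) (E ^ k) hA hV hd).congr_deriv ?_
  simp only [ha]
  rw [← mom_prod, ← mom_prod, ← mom_prod, ← mom_shift_left, ← mom_shift_right,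
    ← Matrix.trace_neg, ← Matrix.trace_sub,
    ← Matrix.trace_add, ← Matrix.trace_sub, ← Matrix.trace_add]
  congr 1
  simp only [pow_one, pow_zero, mul_one, one_mul]
  generalize E ^ j = P
  generalize E ^ k = Q
  generalize E ^ 2 = E2
  generalize E ^ 3 = E3
  noncomm_ring

lemma contDiff_mom {E : Mat N} {F : Type*} [NormedAddCommGroup F] [NormedSpace ℝ F]
    {n : WithTop ℕ∞} {A V : F → Mat N} (hA : ContDiff ℝ n A) (hV : ContDiff ℝ n V)
    (hd : ∀ s, (A s).det ≠ 0) (j k : ℕ) :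
    ContDiff ℝ n (fun s => mom E (A s)⁻¹ (V s) j k) :=
  (traceL (N := N)).contDiff.comp
    (((contDiff_const.mul (contDiff_inv hA hd)).mul contDiff_const).mul hV)

/-- The algebraic part: moments obeying the closed system give a KdV solution. -/
lemma kdv_of_moments (a : ℕ → ℕ → ℝ × ℝ → ℝ)
    (hs : ∀ j k p, a j k p = a k j p)
    (hr : ∀ j k p, a j (k + 2) p - a (j + 2) k p = a j 1 p * a 0 k p - a j 0 p * a 1 k p)
    (hx : ∀ j k x t, HasDerivAt (fun x => a j k (x, t))
      (-a (j + 1) k (x, t) - a j (k + 1) (x, t) + a j 0 (x, t) * a 0 k (x, t)) x)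
    (ht : ∀ j k x t, HasDerivAt (fun t => a j k (x, t))
      (-a (j + 3) k (x, t) - a j (k + 3) (x, t) + a j 2 (x, t) * a 0 k (x, t)
        - a j 1 (x, t) * a 1 k (x, t) + a j 0 (x, t) * a 2 k (x, t)) t)
    (u : ℝ × ℝ → ℝ) (hu : u = fun p => 4 * a 0 1 p - 2 * a 0 0 p ^ 2) (p : ℝ × ℝ) :
    pderivT u p =
        3 / 2 * u p * pderivX u p + 1 / 4 * pderivX (pderivX (pderivX u)) p := by
  have w1 : ∀ x t, HasDerivAt (fun x => a 0 0 (x, t)) (-2 * a 0 1 (x, t) + a 0 0 (x, t) ^ 2) x :=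
    fun x t => (hx 0 0 x t).congr_deriv (by simp only [zero_add]; rw [hs 1 0]; ring)
  have b1 : ∀ x t, HasDerivAt (fun x => a 0 1 (x, t))
      (-a 1 1 (x, t) - a 0 2 (x, t) + a 0 0 (x, t) * a 0 1 (x, t)) x :=
    fun x t => (hx 0 1 x t).congr_deriv (by ring)
  have c1 : ∀ x t, HasDerivAt (fun x => a 0 2 (x, t))
      (-a 1 2 (x, t) - a 0 3 (x, t) + a 0 0 (x, t) * a 0 2 (x, t)) x :=
    fun x t => (hx 0 2 x t).congr_deriv (by ring)
  have d1 : ∀ x t, HasDerivAt (fun x => a 1 1 (x, t))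
      (-2 * a 1 2 (x, t) + a 0 1 (x, t) ^ 2) x :=
    fun x t => (hx 1 1 x t).congr_deriv
      (by simp only [Nat.reduceAdd]; rw [hs 2 1, hs 1 0]; ring)
  have e1 : ∀ x t, HasDerivAt (fun x => a 0 3 (x, t))
      (-a 1 3 (x, t) - a 0 4 (x, t) + a 0 0 (x, t) * a 0 3 (x, t)) x :=
    fun x t => (hx 0 3 x t).congr_deriv (by ring)
  have f1 : ∀ x t, HasDerivAt (fun x => a 1 2 (x, t))
      (-a 2 2 (x, t) - a 1 3 (x, t) + a 0 1 (x, t) * a 0 2 (x, t)) x :=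
    fun x t => (hx 1 2 x t).congr_deriv (by simp only [Nat.reduceAdd]; rw [hs 1 0])
  have wt : ∀ x t, HasDerivAt (fun t => a 0 0 (x, t))
      (-2 * a 0 3 (x, t) + 2 * a 0 2 (x, t) * a 0 0 (x, t) - a 0 1 (x, t) ^ 2) t :=
    fun x t => (ht 0 0 x t).congr_deriv
      (by simp only [zero_add]; rw [hs 3 0, hs 1 0, hs 2 0]; ring)
  have bt : ∀ x t, HasDerivAt (fun t => a 0 1 (x, t))
      (-a 1 3 (x, t) - a 0 4 (x, t) + a 0 2 (x, t) * a 0 1 (x, t) - a 0 1 (x, t) * a 1 1 (x, t)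
        + a 0 0 (x, t) * a 1 2 (x, t)) t :=
    fun x t => (ht 0 1 x t).congr_deriv
      (by simp only [zero_add, Nat.reduceAdd]; rw [hs 3 1, hs 2 1])
  have R1 : ∀ p, a 0 3 p - a 1 2 p = a 0 1 p ^ 2 - a 0 0 p * a 1 1 p := fun p => by
    have := hr 0 1 p
    simp only [zero_add, Nat.reduceAdd] at this
    rw [hs 2 1] at this
    rw [this]; ring
  have R2 : ∀ p, a 0 4 p - a 2 2 p = a 0 1 p * a 0 2 p - a 0 0 p * a 1 2 p := fun p => by
    have := hr 0 2 p
    simpa only [zero_add, Nat.reduceAdd] using this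
  have Ut : pderivT u p = 4 * (-a 1 3 p - a 0 4 p + a 0 2 p * a 0 1 p - a 0 1 p * a 1 1 p
        + a 0 0 p * a 1 2 p) - 4 * a 0 0 p *
        (-2 * a 0 3 p + 2 * a 0 2 p * a 0 0 p - a 0 1 p ^ 2) := by
    obtain ⟨x, t⟩ := p
    subst hu
    refine ((((bt x t).const_mul 4).sub (((wt x t).pow 2).const_mul 2)).congr_deriv ?_).deriv
    simp; ring
  have U1 : pderivX u = fun p => -4 * a 1 1 p - 4 * a 0 2 p + 12 * (a 0 0 p * a 0 1 p)
      - 4 * a 0 0 p ^ 3 := by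
    funext ⟨x, t⟩
    subst hu
    refine ((((b1 x t).const_mul 4).sub (((w1 x t).pow 2).const_mul 2)).congr_deriv ?_).deriv
    simp; ring
  have U2 : pderivX (pderivX u) = fun p => 12 * a 1 2 p + 4 * a 0 3 p - 28 * a 0 1 p ^ 2
      - 16 * (a 0 0 p * a 0 2 p) - 12 * (a 0 0 p * a 1 1 p) + 48 * (a 0 0 p ^ 2 * a 0 1 p)
      - 12 * a 0 0 p ^ 4 := by
    funext ⟨x, t⟩
    rw [U1]
    refine ((((((d1 x t).const_mul (-4)).sub ((c1 x t).const_mul 4)).add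
      (((w1 x t).mul (b1 x t)).const_mul 12)).sub
      (((w1 x t).pow 3).const_mul 4)).congr_deriv ?_).deriv
    simp; ring
  have U3 : pderivX (pderivX (pderivX u)) p =
      12 * (-a 2 2 p - a 1 3 p + a 0 1 p * a 0 2 p)
      + 4 * (-a 1 3 p - a 0 4 p + a 0 0 p * a 0 3 p)
      - 56 * a 0 1 p * (-a 1 1 p - a 0 2 p + a 0 0 p * a 0 1 p)
      - 16 * ((-2 * a 0 1 p + a 0 0 p ^ 2) * a 0 2 p
        + a 0 0 p * (-a 1 2 p - a 0 3 p + a 0 0 p * a 0 2 p))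
      - 12 * ((-2 * a 0 1 p + a 0 0 p ^ 2) * a 1 1 p
        + a 0 0 p * (-2 * a 1 2 p + a 0 1 p ^ 2))
      + 48 * (2 * a 0 0 p * (-2 * a 0 1 p + a 0 0 p ^ 2) * a 0 1 p
        + a 0 0 p ^ 2 * (-a 1 1 p - a 0 2 p + a 0 0 p * a 0 1 p))
      - 48 * a 0 0 p ^ 3 * (-2 * a 0 1 p + a 0 0 p ^ 2) := by
    obtain ⟨x, t⟩ := p
    rw [U2]
    refine ((((((((f1 x t).const_mul 12).add ((e1 x t).const_mul 4)).sub
      (((b1 x t).pow 2).const_mul 28)).sub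
      (((w1 x t).mul (c1 x t)).const_mul 16)).sub
      (((w1 x t).mul (d1 x t)).const_mul 12)).add
      ((((w1 x t).pow 2).mul (b1 x t)).const_mul 48)).sub
      (((w1 x t).pow 4).const_mul 12)).congr_deriv ?_ |>.deriv
    simp; ring
  rw [Ut, U3, U1, hu]
  linear_combination (-3) * R2 p + 3 * a 0 0 p * R1 p

end KdVAux

section

open KdVAux

attribute [local instance] Matrix.linftyOpNormedRing Matrix.linftyOpNormedAlgebra

/-- The N-soliton solution `u = 2 ∂_x² log det(I + G(x,t))` of the KdV equation
`u_t = (3/2) u u_x + (1/4) u_{xxx}`, where `G` is the scattering-data matrix. -/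
theorem N_soliton_solves_KdV
    (N : ℕ) (hN : 1 ≤ N) (m η : Fin N → ℝ)
    (hm : ∀ i, 0 < m i) (hη : ∀ i, 0 < η i) (hη' : Function.Injective η)
    (G : ℝ → ℝ → Matrix (Fin N) (Fin N) ℝ)
    (hG : ∀ x t, G x t = Matrix.of fun i j =>
      Real.sqrt (m i * m j) / (η i + η j) *
        Real.exp (-(η i + η j) * x - (η i ^ 3 + η j ^ 3) * t))
    (hdet : ∀ x t : ℝ, 0 < (1 + G x t).det)
    (u : ℝ × ℝ → ℝ)
    (hu : u = fun p =>
      2 * pderivX (pderivX (fun q => Real.log (1 + G q.1 q.2).det)) p) :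
    ContDiff ℝ (⊤ : ℕ∞) u ∧
    (∀ p : ℝ × ℝ,
      pderivT u p =
        3 / 2 * u p * pderivX u p + 1 / 4 * pderivX (pderivX (pderivX u)) p) := by
  obtain ⟨E, hE⟩ : ∃ E : Mat N, E = diagonal η := ⟨_, rfl⟩
  obtain ⟨v, hv⟩ : ∃ v : ℝ × ℝ → Fin N → ℝ, v = fun p i =>
    Real.sqrt (m i) * Real.exp (-(η i) * p.1 - η i ^ 3 * p.2) := ⟨_, rfl⟩
  have hd : ∀ p : ℝ × ℝ, (1 + G p.1 p.2).det ≠ 0 := fun p => (hdet _ _).ne'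
  have hGe : ∀ x t i j, G x t i j = Real.sqrt (m i * m j) / (η i + η j) *
        Real.exp (-(η i + η j) * x - (η i ^ 3 + η j ^ 3) * t) := by
    intro x t i j; rw [hG]; rfl
  have hVe : ∀ p i j, vecMulVec (v p) (v p) i j = Real.sqrt (m i * m j) *
        Real.exp (-(η i + η j) * p.1 - (η i ^ 3 + η j ^ 3) * p.2) := by
    intro p i j
    rw [Matrix.vecMulVec_apply, hv, Real.sqrt_mul (hm i).le]
    have : Real.exp (-(η i + η j) * p.1 - (η i ^ 3 + η j ^ 3) * p.2) =
      Real.exp (-(η i) * p.1 - η i ^ 3 * p.2) * Real.exp (-(η j) * p.1 - η j ^ 3 * p.2) := by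
      rw [← Real.exp_add]; congr 1; ring
    rw [this]; ring
  have hGV : ∀ x t i j, vecMulVec (v (x, t)) (v (x, t)) i j = (η i + η j) * G x t i j := by
    intro x t i j
    have := (add_pos (hη i) (hη j)).ne'
    rw [hVe, hGe]
    field_simp
  have hexpx : ∀ i j x t, HasDerivAt
      (fun x => Real.exp (-(η i + η j) * x - (η i ^ 3 + η j ^ 3) * t))
      (-(η i + η j) * Real.exp (-(η i + η j) * x - (η i ^ 3 + η j ^ 3) * t)) x := by
    intro i j x t
    refine ((((hasDerivAt_id x).const_mul (-(η i + η j))).sub_const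
      ((η i ^ 3 + η j ^ 3) * t)).exp).congr_deriv ?_
    simp; ring
  have hexpt : ∀ i j x t, HasDerivAt
      (fun t => Real.exp (-(η i + η j) * x - (η i ^ 3 + η j ^ 3) * t))
      (-(η i ^ 3 + η j ^ 3) * Real.exp (-(η i + η j) * x - (η i ^ 3 + η j ^ 3) * t)) t := by
    intro i j x t
    refine ((((hasDerivAt_id t).const_mul (η i ^ 3 + η j ^ 3)).const_sub
      (-(η i + η j) * x)).exp).congr_deriv ?_
    simp; ring
  have hAx : ∀ x t, HasDerivAt (fun x => 1 + G x t)
      (-vecMulVec (v (x, t)) (v (x, t))) x := by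
    intro x t
    refine HasDerivAt.const_add _ (hasDerivAt_mat fun i j => ?_)
    simp only [hGe]
    refine ((hexpx i j x t).const_mul _).congr_deriv ?_
    rw [Matrix.neg_apply, hGV, hGe]; ring
  have hAt : ∀ x t, HasDerivAt (fun t => 1 + G x t)
      (-(E ^ 2 * vecMulVec (v (x, t)) (v (x, t)) - E * vecMulVec (v (x, t)) (v (x, t)) * E
      + vecMulVec (v (x, t)) (v (x, t)) * E ^ 2)) t := by
    intro x t
    refine HasDerivAt.const_add _ (hasDerivAt_mat fun i j => ?_)
    simp only [hGe]
    refine ((hexpt i j x t).const_mul _).congr_deriv ?_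
    rw [hE, Matrix.diagonal_pow]
    simp only [Matrix.neg_apply, Matrix.add_apply, Matrix.sub_apply, Matrix.diagonal_mul,
      Matrix.mul_diagonal, hGV, hGe, Pi.pow_apply]
    ring
  have hVx : ∀ x t, HasDerivAt (fun x => vecMulVec (v (x, t)) (v (x, t)))
      (-(E * vecMulVec (v (x, t)) (v (x, t)) + vecMulVec (v (x, t)) (v (x, t)) * E)) x := by
    intro x t
    refine hasDerivAt_mat fun i j => ?_
    simp only [hVe]
    refine ((hexpx i j x t).const_mul _).congr_deriv ?_
    rw [hE]
    simp only [Matrix.neg_apply, Matrix.add_apply, Matrix.diagonal_mul,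
      Matrix.mul_diagonal, hVe]
    ring
  have hVt : ∀ x t, HasDerivAt (fun t => vecMulVec (v (x, t)) (v (x, t)))
      (-(E ^ 3 * vecMulVec (v (x, t)) (v (x, t)) + vecMulVec (v (x, t)) (v (x, t)) * E ^ 3)) t := by
    intro x t
    refine hasDerivAt_mat fun i j => ?_
    simp only [hVe]
    refine ((hexpt i j x t).const_mul _).congr_deriv ?_
    rw [hE, Matrix.diagonal_pow]
    simp only [Matrix.neg_apply, Matrix.add_apply, Matrix.diagonal_mul,
      Matrix.mul_diagonal, hVe, Pi.pow_apply]
    ring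
  have hcA : ContDiff ℝ (⊤ : ℕ∞) (fun p : ℝ × ℝ => 1 + G p.1 p.2) := by
    refine contDiff_const.add (contDiff_mat fun i j => ?_)
    simp only [hGe]
    fun_prop
  have hcV : ContDiff ℝ (⊤ : ℕ∞) (fun p : ℝ × ℝ => vecMulVec (v p) (v p)) := by
    refine contDiff_mat fun i j => ?_
    simp only [hVe]
    fun_prop
  obtain ⟨a, ha⟩ : ∃ a : ℕ → ℕ → ℝ × ℝ → ℝ, a = fun j k p =>
    mom E (1 + G p.1 p.2)⁻¹ (vecMulVec (v p) (v p)) j k := ⟨_, rfl⟩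
  have hs : ∀ j k p, a j k p = a k j p := by
    intro j k p
    rw [ha]
    refine mom_symm ?_ ?_ ?_ j k
    · rw [hE, Matrix.diagonal_transpose]
    · rw [Matrix.transpose_nonsing_inv, Matrix.transpose_add, Matrix.transpose_one]
      congr 2
      ext i j
      rw [Matrix.transpose_apply, hGe, hGe, mul_comm (m i), add_comm (η i), add_comm (η i ^ 3)]
    · rw [Matrix.transpose_vecMulVec]
  have hr : ∀ j k p,
      a j (k + 2) p - a (j + 2) k p = a j 1 p * a 0 k p - a j 0 p * a 1 k p := by
    intro j k p
    rw [ha]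
    refine mom_rel (hd p) ?_ j k
    have : E ^ 2 * (1 + G p.1 p.2) - (1 + G p.1 p.2) * E ^ 2
        = E ^ 2 * G p.1 p.2 - G p.1 p.2 * E ^ 2 := by noncomm_ring
    rw [this, hE, Matrix.diagonal_pow]
    ext i j
    obtain ⟨x, t⟩ := p
    simp only [Matrix.sub_apply, Matrix.diagonal_mul, Matrix.mul_diagonal, hGV, Pi.pow_apply]
    ring
  have hx : ∀ j k x t, HasDerivAt (fun x => a j k (x, t))
      (-a (j + 1) k (x, t) - a j (k + 1) (x, t) + a j 0 (x, t) * a 0 k (x, t)) x := by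
    intro j k x t
    have := mom_deriv_x (E := E) (A := fun x => 1 + G x t) (v := fun x => v (x, t)) (s := x)
      (hAx x t) (hVx x t) (hd (x, t)) (fun j k => a j k (x, t)) (fun j k => by rw [ha]) j k
    rw [ha] at this ⊢
    exact this
  have ht : ∀ j k x t, HasDerivAt (fun t => a j k (x, t))
      (-a (j + 3) k (x, t) - a j (k + 3) (x, t) + a j 2 (x, t) * a 0 k (x, t)
        - a j 1 (x, t) * a 1 k (x, t) + a j 0 (x, t) * a 2 k (x, t)) t := by
    intro j k x t
    have := mom_deriv_t (E := E) (A := fun t => 1 + G x t) (v := fun t => v (x, t)) (s := t)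
      (hAt x t) (hVt x t) (hd (x, t)) (fun j k => a j k (x, t)) (fun j k => by rw [ha]) j k
    rw [ha] at this ⊢
    exact this
  have hL : pderivX (fun q => Real.log (1 + G q.1 q.2).det) = fun p => -a 0 0 p := by
    funext ⟨x, t⟩
    refine (((hasDerivAt_det (hAx x t) (hd (x, t))).log (hd (x, t))).congr_deriv ?_).deriv
    rw [mul_div_cancel_left₀ _ (hd (x, t)), ha]
    simp [mom]
  have hu2 : u = fun p => 4 * a 0 1 p - 2 * a 0 0 p ^ 2 := by
    rw [hu, hL]
    funext ⟨x, t⟩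
    have : pderivX (fun p => -a 0 0 p) (x, t) = _ := ((hx 0 0 x t).neg).deriv
    rw [this]
    simp only [zero_add]
    rw [hs 1 0]
    ring
  refine ⟨?_, kdv_of_moments a hs hr hx ht u hu2⟩
  have hc : ∀ j k, ContDiff ℝ (⊤ : ℕ∞) (a j k) := by
    intro j k
    rw [ha]
    exact contDiff_mom hcA hcV hd j k
  rw [hu2]
  exact (contDiff_const.mul (hc 0 1)).sub (contDiff_const.mul ((hc 0 0).pow 2))

end
end

section
/- Let N ≥ 1, let c_1, …, c_N be positive reals and let κ_1, …, κ_N be pairwise distinct positive reals. For (x,t) ∈ ℝ × ℝ define the N×N real matrix A(x,t) by A_{nm}(x,t) = δ_{nm} + c_n²·(e^{−(κ_m+κ_n)x}/(κ_m+κ_n))·e^{8κ_n³ t}. Then det A(x,t) > 0 for all (x,t), and the function u(x,t) := −2·∂_x²(log det A(x,t)) is smooth and solves the KdV equation u_t − 6·u·u_x + u_{xxx} = 0 at every point of ℝ × ℝ (the N-soliton solution). -/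
open Real Matrix

open scoped Matrix.Norms.Operator

section Helpers

variable {N : ℕ}

theorem hs_hasDerivAt_matrix {f : ℝ → Matrix (Fin N) (Fin N) ℝ}
    {f' : Matrix (Fin N) (Fin N) ℝ} {x : ℝ}
    (h : ∀ i j, HasDerivAt (fun y => f y i j) (f' i j) x) : HasDerivAt f f' x := by
  have e : ∀ M : Matrix (Fin N) (Fin N) ℝ,
      M = ∑ i, ∑ j, M i j • Matrix.single i j (1 : ℝ) := by
    intro M
    conv_lhs => rw [Matrix.matrix_eq_sum_single M]
    simp
  have e1 : f = fun y => ∑ i, ∑ j, f y i j • Matrix.single i j (1 : ℝ) := by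
    funext y; exact e (f y)
  rw [e1, e f']
  refine HasDerivAt.fun_sum fun i _ => HasDerivAt.fun_sum fun j _ => ?_
  exact (h i j).smul_const _

theorem hs_contDiff_matrix {f : ℝ × ℝ → Matrix (Fin N) (Fin N) ℝ}
    (h : ∀ i j, ContDiff ℝ (⊤ : ℕ∞) (fun y => f y i j)) : ContDiff ℝ (⊤ : ℕ∞) f := by
  have e : ∀ M : Matrix (Fin N) (Fin N) ℝ,
      M = ∑ i, ∑ j, M i j • Matrix.single i j (1 : ℝ) := by
    intro M
    conv_lhs => rw [Matrix.matrix_eq_sum_single M]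
    simp
  have e1 : f = fun y => ∑ i, ∑ j, f y i j • Matrix.single i j (1 : ℝ) := by
    funext y; exact e (f y)
  rw [e1]
  refine ContDiff.sum fun i _ => ContDiff.sum fun j _ => ?_
  exact (h i j).smul contDiff_const

theorem hs_contDiff_entry (i j : Fin N) :
    ContDiff ℝ 1 (fun M : Matrix (Fin N) (Fin N) ℝ => M i j) :=
  (LinearMap.toContinuousLinearMap (Matrix.entryLinearMap ℝ ℝ i j)).contDiff

theorem hs_contDiff_det : ContDiff ℝ 1 (fun M : Matrix (Fin N) (Fin N) ℝ => M.det) := by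
  simp only [Matrix.det_apply']
  refine ContDiff.sum fun σ _ => contDiff_const.mul ?_
  exact contDiff_prod fun i _ => hs_contDiff_entry _ _

/-- Jacobi formula. -/
theorem hs_jacobi {f : ℝ → Matrix (Fin N) (Fin N) ℝ}
    {f' : Matrix (Fin N) (Fin N) ℝ} {x : ℝ} (h : HasDerivAt f f' x)
    (hd : (f x).det ≠ 0) :
    HasDerivAt (fun y => (f y).det) ((f x).det * ((f x)⁻¹ * f').trace) x := by
  have hF := (hs_contDiff_det (N := N)).differentiable (by norm_num) (f x) |>.hasFDerivAt
  have h1 := hF.comp_hasDerivAt x h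
  have hl : HasDerivAt (fun s : ℝ => f x + s • f') f' 0 := by
    have := ((hasDerivAt_id (0 : ℝ)).smul_const f').const_add (f x)
    rw [one_smul] at this
    exact this
  have hF' : HasFDerivAt (fun M : Matrix (Fin N) (Fin N) ℝ => M.det)
      (fderiv ℝ (fun M : Matrix (Fin N) (Fin N) ℝ => M.det) (f x)) (f x + (0 : ℝ) • f') := by
    rw [zero_smul, add_zero]
    exact hF
  have h2 := hF'.comp_hasDerivAt (0 : ℝ) hl
  have h3 : HasDerivAt (fun s : ℝ => (f x + s • f').det)
      ((f x).det * ((f x)⁻¹ * f').trace) 0 := by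
    have e : (fun s : ℝ => (f x + s • f').det) = fun s : ℝ => (f x).det *
        (1 + ((f x)⁻¹ * f').trace * s +
          (Matrix.det (1 + (Polynomial.X : Polynomial ℝ) • ((f x)⁻¹ * f').map
            Polynomial.C)).divX.divX.eval s * s ^ 2) := by
      funext s
      rw [← Matrix.det_one_add_smul, ← Matrix.det_mul, mul_add, mul_one, Matrix.mul_smul,
        Matrix.mul_nonsing_inv_cancel_left _ _ (isUnit_iff_ne_zero.mpr hd)]
    rw [e]
    generalize (Matrix.det (1 + (Polynomial.X : Polynomial ℝ) • ((f x)⁻¹ * f').map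
            Polynomial.C)).divX.divX = q
    have := ((((hasDerivAt_id (0 : ℝ)).const_mul ((f x)⁻¹ * f').trace).const_add 1).add
      ((q.hasDerivAt 0).mul ((hasDerivAt_id (0 : ℝ)).pow 2))).const_mul (f x).det
    refine HasDerivAt.congr_deriv this ?_
    simp
  have h4 := h2.unique h3
  exact h1.congr_deriv h4

theorem hs_inv_deriv {f : ℝ → Matrix (Fin N) (Fin N) ℝ}
    {f' : Matrix (Fin N) (Fin N) ℝ} {x : ℝ} (h : HasDerivAt f f' x)
    (hd : (f x).det ≠ 0) :
    HasDerivAt (fun y => (f y)⁻¹) (-((f x)⁻¹ * f' * (f x)⁻¹)) x := by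
  obtain ⟨U, hU⟩ := (Matrix.isUnit_iff_isUnit_det (f x)).mpr (isUnit_iff_ne_zero.mpr hd)
  have h0 := hasFDerivAt_ringInverse (𝕜 := ℝ) U
  rw [hU] at h0
  have h1 := h0.comp_hasDerivAt x h
  have e : (fun y => (f y)⁻¹) = Ring.inverse ∘ f := by
    funext y; exact Matrix.nonsing_inv_eq_ringInverse _
  rw [e]
  refine HasDerivAt.congr_deriv h1 ?_
  have : (f x)⁻¹ = (↑U⁻¹ : Matrix (Fin N) (Fin N) ℝ) := by
    rw [Matrix.nonsing_inv_eq_ringInverse, ← hU, Ring.inverse_unit]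
  rw [this]
  simp

theorem hs_inv_contDiff {f : ℝ × ℝ → Matrix (Fin N) (Fin N) ℝ}
    (h : ContDiff ℝ (⊤ : ℕ∞) f) (hd : ∀ p, (f p).det ≠ 0) :
    ContDiff ℝ (⊤ : ℕ∞) (fun y => (f y)⁻¹) := by
  rw [contDiff_iff_contDiffAt]
  intro x
  obtain ⟨U, hU⟩ := (Matrix.isUnit_iff_isUnit_det (f x)).mpr (isUnit_iff_ne_zero.mpr (hd x))
  have h0 := contDiffAt_ringInverse ℝ (n := (⊤ : ℕ∞)) U
  rw [hU] at h0
  have e : (fun y => (f y)⁻¹) = Ring.inverse ∘ f := by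
    funext y; exact Matrix.nonsing_inv_eq_ringInverse _
  rw [e]
  exact h0.comp x h.contDiffAt

theorem hs_trace_contDiff : ContDiff ℝ (⊤ : ℕ∞)
    (fun M : Matrix (Fin N) (Fin N) ℝ => M.trace) :=
  (LinearMap.toContinuousLinearMap (Matrix.traceLinearMap (Fin N) ℝ ℝ)).contDiff

theorem hs_trace_deriv {f : ℝ → Matrix (Fin N) (Fin N) ℝ}
    {f' : Matrix (Fin N) (Fin N) ℝ} {x : ℝ} (h : HasDerivAt f f' x) :
    HasDerivAt (fun y => (f y).trace) f'.trace x :=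
  (LinearMap.toContinuousLinearMap
    (Matrix.traceLinearMap (Fin N) ℝ ℝ)).hasFDerivAt.comp_hasDerivAt x h

theorem hs_pderivX {f f' : ℝ × ℝ → ℝ}
    (h : ∀ x t, HasDerivAt (fun y => f (y, t)) (f' (x, t)) x) : pderivX f = f' := by
  funext p
  exact (h p.1 p.2).deriv

theorem hs_pderivT {f f' : ℝ × ℝ → ℝ}
    (h : ∀ x t, HasDerivAt (fun y => f (x, y)) (f' (x, t)) t) : pderivT f = f' := by
  funext p
  exact (h p.1 p.2).deriv

/-- The Cauchy matrix is positive semidefinite, as a quadratic form. -/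
theorem hs_cauchy_nonneg (κ : Fin N → ℝ) (hκ : ∀ i, 0 < κ i) (v : Fin N → ℝ) :
    0 ≤ ∑ i, ∑ j, v i * v j / (κ i + κ j) := by
  let g : ℝ → ℝ := fun s => ∑ i, ∑ j, v i * v j / (κ i + κ j) * Real.exp (-(κ i + κ j) * s)
  have hpos : ∀ i j, 0 < κ i + κ j := fun i j => add_pos (hκ i) (hκ j)
  have hg : ∀ s, HasDerivAt g (-(∑ i, v i * Real.exp (-κ i * s)) ^ 2) s := by
    intro s
    have : HasDerivAt g (∑ i, ∑ j, v i * v j / (κ i + κ j) *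
        (Real.exp (-(κ i + κ j) * s) * (-(κ i + κ j)))) s := by
      refine HasDerivAt.fun_sum fun i _ => HasDerivAt.fun_sum fun j _ => ?_
      have h1 : HasDerivAt (fun s : ℝ => -(κ i + κ j) * s) (-(κ i + κ j)) s := by
        simpa using (hasDerivAt_id s).const_mul (-(κ i + κ j))
      exact h1.exp.const_mul _
    convert this using 1
    rw [sq, Finset.sum_mul_sum, ← Finset.sum_neg_distrib]
    refine Finset.sum_congr rfl fun i _ => ?_
    rw [← Finset.sum_neg_distrib]
    refine Finset.sum_congr rfl fun j _ => ?_
    have : -(κ i + κ j) * s = -κ i * s + -κ j * s := by ring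
    rw [this, Real.exp_add]
    have := (hpos i j).ne'
    field_simp
  have hanti : Antitone g := by
    refine antitone_of_deriv_nonpos (fun s => (hg s).differentiableAt) fun s => ?_
    rw [(hg s).deriv]
    exact neg_nonpos.mpr (sq_nonneg _)
  have hlim : Filter.Tendsto g Filter.atTop (nhds 0) := by
    have : Filter.Tendsto g Filter.atTop
        (nhds (∑ i : Fin N, ∑ j : Fin N, v i * v j / (κ i + κ j) * 0)) := by
      refine tendsto_finsetSum _ fun i _ => tendsto_finsetSum _ fun j _ => ?_
      refine Filter.Tendsto.const_mul _ ?_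
      refine Real.tendsto_exp_atBot.comp ?_
      exact Filter.tendsto_id.const_mul_atTop_of_neg (neg_lt_zero.mpr (hpos i j))
    simpa using this
  have := hanti.le_of_tendsto hlim 0
  simpa [g] using this

theorem hs_det_pos (κ : Fin N → ℝ) (hκ : ∀ i, 0 < κ i) (r s : Fin N → ℝ)
    (hr : ∀ i, 0 < r i) (hs : ∀ i, 0 < s i) :
    0 < (1 + Matrix.of fun n m => r n * s m / (κ m + κ n) :
      Matrix (Fin N) (Fin N) ℝ).det := by
  let C : Matrix (Fin N) (Fin N) ℝ := Matrix.of fun n m => 1 / (κ m + κ n)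
  let T : Matrix (Fin N) (Fin N) ℝ := Matrix.diagonal fun i => √(r i * s i)
  have e1 : (Matrix.of fun n m => r n * s m / (κ m + κ n) : Matrix (Fin N) (Fin N) ℝ)
      = Matrix.diagonal r * (C * Matrix.diagonal s) := by
    ext i j
    simp [C, Matrix.diagonal_mul, Matrix.mul_diagonal]
    ring
  have e2 : Matrix.diagonal s * Matrix.diagonal r = T * T := by
    simp only [T, Matrix.diagonal_mul_diagonal]
    congr 1
    funext i
    rw [Real.mul_self_sqrt (mul_pos (hr i) (hs i)).le, mul_comm]
  rw [e1, Matrix.det_one_add_mul_comm, mul_assoc, e2, ← mul_assoc, Matrix.det_one_add_mul_comm]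
  refine Matrix.PosDef.det_pos (Matrix.PosDef.one.add_posSemidef ?_)
  refine Matrix.PosSemidef.of_dotProduct_mulVec_nonneg ?_ fun x => ?_
  · refine Matrix.IsHermitian.ext fun i j => ?_
    simp [C, T, Matrix.diagonal_mul, Matrix.mul_diagonal]
    rw [add_comm (κ i)]
    ring
  · have := hs_cauchy_nonneg κ hκ (fun i => √(r i * s i) * x i)
    refine this.trans_eq (Eq.symm ?_)
    simp only [dotProduct, Matrix.mulVec, Finset.mul_sum]
    refine Finset.sum_congr rfl fun i _ => Finset.sum_congr rfl fun j _ => ?_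
    simp [C, T, Matrix.diagonal_mul, Matrix.mul_diagonal]
    rw [add_comm (κ i)]
    ring

end Helpers
section Words
variable {R : Type*} [NormedRing R] [NormedAlgebra ℝ R]

def hsQ (K P : R) : R := P * K + K * P - P * K * P - P * K * P

def hsDQ (K P Q : R) : R :=
  Q * K + K * Q - (Q * K * P + P * K * Q) - (Q * K * P + P * K * Q)

def hsPt (K P : R) : R := (8 : ℝ) • (P * (K * K * K) * P - P * (K * K * K))

def hsDPt (K P Q : R) : R :=
  (8 : ℝ) • (Q * (K * K * K) * P + P * (K * K * K) * Q - Q * (K * K * K))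

def hsDDQ (K P Q Q' : R) : R :=
  Q' * K + K * Q' - (Q' * K * P + Q * K * Q + (Q * K * Q + P * K * Q'))
    - (Q' * K * P + Q * K * Q + (Q * K * Q + P * K * Q'))

theorem hs_words1 (K P : R) (τ : R →L[ℝ] ℝ) (hτ : ∀ a b, τ (a * b) = τ (b * a)) :
    τ (K * hsDDQ K P (hsQ K P) (hsDQ K P (hsQ K P))) =
      -12 * τ (K * hsQ K P * K * hsQ K P) - τ (K * hsPt K P) := by
  simp only [hsDDQ, hsDQ, hsQ, hsPt, mul_add, add_mul, mul_sub, sub_mul, map_add, map_sub,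
    mul_smul_comm, map_smul, smul_eq_mul, mul_assoc]
  have h1 := hτ K (K * (P * (K * K)))
  have h2 := hτ (K * K) (K * (P * K))
  have h3 := hτ (K * K * K) (K * P)
  have h4 := hτ (K * P) (K * (P * (K * K)))
  have h5 := hτ (K * K * K * P) (K * P)
  simp only [mul_assoc] at h1 h2 h3 h4 h5
  linarith

theorem hs_words2 (K P : R) (τ : R →L[ℝ] ℝ) :
    τ (K * hsDQ K P (hsPt K P)) = τ (K * hsDPt K P (hsQ K P)) := by
  simp only [hsDPt, hsDQ, hsQ, hsPt, mul_add, add_mul, mul_sub, sub_mul, map_add, map_sub,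
    mul_smul_comm, smul_mul_assoc, map_smul, smul_eq_mul, mul_assoc]
  ring_nf
end Words

section Calculus
variable {R : Type*} [NormedRing R] [NormedAlgebra ℝ R]

theorem hs_deriv_Q (K : R) {P : ℝ → R} {P' : R} {x : ℝ} (h : HasDerivAt P P' x) :
    HasDerivAt (fun y => hsQ K (P y)) (hsDQ K (P x) P') x := by
  have h3 := (h.mul_const K).mul h
  exact (((h.mul_const K).add (h.const_mul K)).sub h3).sub h3

theorem hs_deriv_DQ (K : R) {P Q : ℝ → R} {P' Q' : R} {x : ℝ} (h : HasDerivAt P P' x)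
    (hQ : HasDerivAt Q Q' x) (e : P' = Q x) :
    HasDerivAt (fun y => hsDQ K (P y) (Q y)) (hsDDQ K (P x) (Q x) Q') x := by
  subst e
  have h3 := ((hQ.mul_const K).mul h).add ((h.mul_const K).mul hQ)
  exact (((hQ.mul_const K).add (hQ.const_mul K)).sub h3).sub h3

theorem hs_deriv_Pt (K : R) {P : ℝ → R} {P' : R} {x : ℝ} (h : HasDerivAt P P' x) :
    HasDerivAt (fun y => hsPt K (P y)) (hsDPt K (P x) P') x :=
  ((((h.mul_const (K * K * K)).mul h).sub (h.mul_const (K * K * K)))).const_smul (8 : ℝ)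

theorem hs_deriv_tr (K : R) (τ : R →L[ℝ] ℝ) {P : ℝ → R} {P' : R} {x : ℝ}
    (h : HasDerivAt P P' x) : HasDerivAt (fun y => τ (K * P y)) (τ (K * P')) x :=
  τ.hasFDerivAt.comp_hasDerivAt x (h.const_mul K)

theorem hs_abstract_kdv (K : R) (τ : R →L[ℝ] ℝ) (hτ : ∀ a b, τ (a * b) = τ (b * a))
    (P : ℝ × ℝ → R)
    (hPx : ∀ x t, HasDerivAt (fun y => P (y, t)) (hsQ K (P (x, t))) x)
    (hPt : ∀ x t, HasDerivAt (fun y => P (x, y)) (hsPt K (P (x, t))) t)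
    (hrank : ∀ p, τ (K * hsQ K (P p) * K * hsQ K (P p)) = τ (K * hsQ K (P p)) ^ 2)
    (u : ℝ × ℝ → ℝ) (hu : u = fun p => -4 * τ (K * hsQ K (P p))) (p : ℝ × ℝ) :
    pderivT u p - 6 * u p * pderivX u p + pderivX (pderivX (pderivX u)) p = 0 := by
  have hQx := fun x t => hs_deriv_Q K (hPx x t)
  have hDQx := fun x t => hs_deriv_DQ K (hPx x t) (hQx x t) rfl
  have ux : pderivX u = fun p => -4 * τ (K * hsDQ K (P p) (hsQ K (P p))) := by
    rw [hu]
    exact hs_pderivX fun x t => (hs_deriv_tr K τ (hQx x t)).const_mul (-4)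
  have uxx : pderivX (pderivX u) = fun p => -4 * (-12 * τ (K * hsQ K (P p)) ^ 2
      - τ (K * hsPt K (P p))) := by
    rw [ux]
    refine hs_pderivX fun x t => ?_
    have := (hs_deriv_tr K τ (hDQx x t)).const_mul (-4)
    rw [hs_words1 K _ τ hτ, hrank] at this
    exact this
  have uxxx : pderivX (pderivX (pderivX u)) = fun p => -4 * (-12 * (2 * τ (K * hsQ K (P p)) *
      τ (K * hsDQ K (P p) (hsQ K (P p)))) - τ (K * hsDPt K (P p) (hsQ K (P p)))) := by
    rw [uxx]
    refine hs_pderivX fun x t => ?_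
    have h1 := ((hs_deriv_tr K τ (hQx x t)).pow 2).const_mul (-12)
    have h2 := hs_deriv_tr K τ (hs_deriv_Pt K (hPx x t))
    refine ((h1.sub h2).const_mul (-4)).congr_deriv ?_
    simp
  have ut : pderivT u = fun p => -4 * τ (K * hsDPt K (P p) (hsQ K (P p))) := by
    rw [hu]
    refine hs_pderivT fun x t => ?_
    have := (hs_deriv_tr K τ (hs_deriv_Q K (hPt x t))).const_mul (-4)
    rw [hs_words2] at this
    exact this
  rw [uxxx, ut, ux, hu]
  ring

end Calculus

theorem hs_rank_one {N : ℕ} (X Y : Matrix (Fin N) (Fin N) ℝ) (r s : Fin N → ℝ) :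
    (X * Matrix.vecMulVec r s * Y * (X * Matrix.vecMulVec r s * Y)).trace =
      (X * Matrix.vecMulVec r s * Y).trace ^ 2 := by
  rw [Matrix.mul_vecMulVec, Matrix.vecMulVec_mul, Matrix.vecMulVec_mul_vecMulVec,
    Matrix.trace_vecMulVec]
  simp [Matrix.trace_vecMulVec, dotProduct_comm]
  ring

/-- For the Hirota matrix `A_{nm}(x,t) = δ_{nm} + c_n² e^{−(κ_m+κ_n)x}/(κ_m+κ_n) · e^{8κ_n³ t}`
one has `det A(x,t) > 0`, and `u = −2 ∂_x² log det A` is smooth and solves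
`u_t − 6 u u_x + u_{xxx} = 0` (the N-soliton solution). -/
theorem hirota_N_soliton_solves_KdV
    (N : ℕ) (hN : 1 ≤ N) (c κ : Fin N → ℝ)
    (hc : ∀ i, 0 < c i) (hκ : ∀ i, 0 < κ i) (hκ' : Function.Injective κ)
    (A : ℝ → ℝ → Matrix (Fin N) (Fin N) ℝ)
    (hA : ∀ x t, A x t = Matrix.of fun n m =>
      (if n = m then (1 : ℝ) else 0) +
        c n ^ 2 * (Real.exp (-(κ m + κ n) * x) / (κ m + κ n)) *
          Real.exp (8 * κ n ^ 3 * t))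
    (u : ℝ × ℝ → ℝ)
    (hu : u = fun p =>
      -2 * pderivX (pderivX (fun q => Real.log (A q.1 q.2).det)) p) :
    (∀ x t : ℝ, 0 < (A x t).det) ∧
    ContDiff ℝ (⊤ : ℕ∞) u ∧
    (∀ p : ℝ × ℝ,
      pderivT u p - 6 * u p * pderivX u p + pderivX (pderivX (pderivX u)) p = 0) := by
  let K : Matrix (Fin N) (Fin N) ℝ := Matrix.diagonal κ
  have hne : ∀ i j, κ i + κ j ≠ 0 := fun i j => (add_pos (hκ i) (hκ j)).ne'
  have hpos : ∀ x t : ℝ, 0 < (A x t).det := by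
    intro x t
    have := hs_det_pos κ hκ (fun n => c n ^ 2 * Real.exp (-κ n * x) * Real.exp (8 * κ n ^ 3 * t))
      (fun m => Real.exp (-κ m * x)) (fun n => by have := hc n; positivity) (fun m => by positivity)
    convert this using 2
    rw [hA]
    ext n m
    have e : -(κ m + κ n) * x = -κ m * x + -κ n * x := by ring
    simp only [Matrix.of_apply, Matrix.add_apply, Matrix.one_apply, e, Real.exp_add]
    ring
  have hdet : ∀ x t : ℝ, (A x t).det ≠ 0 := fun x t => (hpos x t).ne'
  have hlyap : ∀ x t, K * (A x t - 1) + (A x t - 1) * K =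
      Matrix.vecMulVec (fun n => c n ^ 2 * Real.exp (-κ n * x) * Real.exp (8 * κ n ^ 3 * t))
        (fun m => Real.exp (-κ m * x)) := by
    intro x t
    rw [hA]
    ext n m
    have e : -(κ m + κ n) * x = -κ m * x + -κ n * x := by ring
    have := hne m n
    simp only [K, Matrix.add_apply, Matrix.sub_apply, Matrix.diagonal_mul, Matrix.mul_diagonal,
      Matrix.of_apply, Matrix.one_apply, Matrix.vecMulVec_apply, e, Real.exp_add]
    field_simp
    ring
  -- derivatives of `A`
  have hAx : ∀ x t, HasDerivAt (fun y => A y t) (-(K * (A x t - 1) + (A x t - 1) * K)) x := by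
    intro x t
    rw [hlyap]
    refine hs_hasDerivAt_matrix fun n m => ?_
    simp only [hA, Matrix.of_apply]
    have h1 : HasDerivAt (fun y : ℝ => -(κ m + κ n) * y) (-(κ m + κ n)) x := by
      simpa using (hasDerivAt_id x).const_mul (-(κ m + κ n))
    refine ((((h1.exp.div_const (κ m + κ n)).const_mul (c n ^ 2)).mul_const
      (Real.exp (8 * κ n ^ 3 * t))).const_add _).congr_deriv ?_
    have e : -(κ m + κ n) * x = -κ m * x + -κ n * x := by ring
    have := hne m n
    simp only [Matrix.neg_apply, Matrix.vecMulVec_apply, e, Real.exp_add]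
    field_simp
  have hAt : ∀ x t, HasDerivAt (fun y => A x y) ((8 : ℝ) • (K * K * K * (A x t - 1))) t := by
    intro x t
    refine hs_hasDerivAt_matrix fun n m => ?_
    simp only [hA, Matrix.of_apply]
    have h1 : HasDerivAt (fun y : ℝ => 8 * κ n ^ 3 * y) (8 * κ n ^ 3) t := by
      simpa using (hasDerivAt_id t).const_mul (8 * κ n ^ 3)
    refine ((h1.exp.const_mul (c n ^ 2 * (Real.exp (-(κ m + κ n) * x) / (κ m + κ n)))).const_add
      _).congr_deriv ?_
    simp only [K, Matrix.smul_apply, Matrix.sub_apply, Matrix.diagonal_mul_diagonal,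
      Matrix.diagonal_mul, Matrix.of_apply, Matrix.one_apply, smul_eq_mul]
    ring
  -- the inverse
  let P : ℝ × ℝ → Matrix (Fin N) (Fin N) ℝ := fun p => (A p.1 p.2)⁻¹
  have hPA : ∀ x t, P (x, t) * A x t = 1 := fun x t =>
    Matrix.nonsing_inv_mul _ (isUnit_iff_ne_zero.mpr (hdet x t))
  have hAP : ∀ x t, A x t * P (x, t) = 1 := fun x t =>
    Matrix.mul_nonsing_inv _ (isUnit_iff_ne_zero.mpr (hdet x t))
  have hQ : ∀ x t, hsQ K (P (x, t)) =
      P (x, t) * (K * (A x t - 1) + (A x t - 1) * K) * P (x, t) := by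
    intro x t
    have h1 := hPA x t
    have h2 := hAP x t
    generalize P (x, t) = p at *
    generalize A x t = a at *
    have e : p * (K * (a - 1) + (a - 1) * K) * p =
        p * K * (a * p) - p * K * p + (p * a) * (K * p) - p * K * p := by noncomm_ring
    rw [e, h1, h2, hsQ]
    noncomm_ring
  have hPx : ∀ x t, HasDerivAt (fun y => P (y, t)) (hsQ K (P (x, t))) x := by
    intro x t
    refine (hs_inv_deriv (hAx x t) (hdet x t)).congr_deriv ?_
    rw [hQ, mul_neg, neg_mul, neg_neg]
  have hPt : ∀ x t, HasDerivAt (fun y => P (x, y)) (hsPt K (P (x, t))) t := by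
    intro x t
    refine (hs_inv_deriv (hAt x t) (hdet x t)).congr_deriv ?_
    change -(P (x, t) * ((8 : ℝ) • (K * K * K * (A x t - 1))) * P (x, t)) = _
    have h2 := hAP x t
    generalize P (x, t) = p at *
    generalize A x t = a at *
    have e : p * (K * K * K * (a - 1)) * p = p * (K * K * K) * (a * p) - p * (K * K * K) * p := by
      noncomm_ring
    rw [Matrix.mul_smul, Matrix.smul_mul, e, h2, hsPt, mul_one, ← smul_neg, neg_sub]
  -- first derivative of the logarithm of the determinant
  have hlog : pderivX (fun q => Real.log (A q.1 q.2).det) =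
      fun p => 2 * (K * P p).trace - 2 * K.trace := by
    refine hs_pderivX fun x t => ?_
    refine ((hs_jacobi (hAx x t) (hdet x t)).log (hdet x t)).congr_deriv ?_
    rw [mul_div_cancel_left₀ _ (hdet x t)]
    change (P (x, t) * -(K * (A x t - 1) + (A x t - 1) * K)).trace = _
    have h1 := hPA x t
    have h2 := hAP x t
    generalize P (x, t) = p at *
    generalize A x t = a at *
    have e : p * -(K * (a - 1) + (a - 1) * K) =
        p * K + p * K - p * (K * a) - (p * a) * K := by noncomm_ring
    rw [e, h1, one_mul, Matrix.trace_sub, Matrix.trace_sub, Matrix.trace_add,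
      Matrix.trace_mul_comm p (K * a), mul_assoc, h2, mul_one, Matrix.trace_mul_comm p K]
    ring
  let τ : Matrix (Fin N) (Fin N) ℝ →L[ℝ] ℝ :=
    LinearMap.toContinuousLinearMap (Matrix.traceLinearMap (Fin N) ℝ ℝ)
  have hτ : ∀ M, τ M = M.trace := fun M => rfl
  have hu' : u = fun p => -4 * τ (K * hsQ K (P p)) := by
    rw [hu, hlog]
    have : pderivX (fun p => 2 * (K * P p).trace - 2 * K.trace) =
        fun p => 2 * τ (K * hsQ K (P p)) := by
      refine hs_pderivX fun x t => ?_
      exact ((hs_deriv_tr K τ (hPx x t)).const_mul 2).sub_const _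
    rw [this]
    funext p
    ring
  refine ⟨hpos, ?_, ?_⟩
  · have hAc : ContDiff ℝ (⊤ : ℕ∞) (fun p : ℝ × ℝ => A p.1 p.2) := by
      refine hs_contDiff_matrix fun n m => ?_
      simp only [hA, Matrix.of_apply]
      fun_prop
    have hPc : ContDiff ℝ (⊤ : ℕ∞) P := hs_inv_contDiff hAc fun p => hdet _ _
    rw [hu']
    refine contDiff_const.mul (τ.contDiff.comp (contDiff_const.mul ?_))
    have h3 := (hPc.mul (contDiff_const (c := K))).mul hPc
    exact (((hPc.mul contDiff_const).add (contDiff_const.mul hPc)).sub h3).sub h3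
  · refine hs_abstract_kdv K τ (fun a b => Matrix.trace_mul_comm a b) P hPx hPt ?_ u hu'
    rintro ⟨x, t⟩
    rw [hQ, hlyap]
    refine Eq.trans (hτ _) (Eq.trans ?_ (congrArg (· ^ 2) (hτ _)).symm)
    have := hs_rank_one (K * P (x, t)) (P (x, t))
      (fun n => c n ^ 2 * Real.exp (-κ n * x) * Real.exp (8 * κ n ^ 3 * t))
      (fun m => Real.exp (-κ m * x))
    simp only [mul_assoc] at this ⊢
    exact this
end
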